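/- Let T ⊂ ℝ be countable and let 𝓘_T be as in the context. Let M′ and M″ be point processes on ℝ^k such that: (i) for every m ≥ 1, all n₁,…,n_m ∈ ℕ, and all pairwise disjoint A₁,…,A_m ∈ 𝓘_T, E[∏_{i=1}^m M′(A_i)!/(M′(A_i)−n_i)!] = E[∏_{i=1}^m M″(A_i)!/(M″(A_i)−n_i)!]; and (ii) for every B ∈ 𝓘_T there exists ε > 0 such that ∑_{n=1}^∞ (εⁿ/n!)·E[M′(B)!/(M′(B)−n)!] < ∞. Then M′ and M″ have the same distribution. -/

import Mathlib

open MeasureTheory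
open scoped ENNReal

noncomputable section

/-- A point process on `ℝ^k`. -/
def IsPointProcess (k : ℕ) {Ω : Type*} [MeasurableSpace Ω]
    (M : Ω → Measure (Fin k → ℝ)) : Prop :=
  (∀ A : Set (Fin k → ℝ), MeasurableSet A → Measurable fun ω => M ω A) ∧
  (∀ ω, ∀ B : Set (Fin k → ℝ), MeasurableSet B → Bornology.IsBounded B →
    ∃ n : ℕ, M ω B = n)

/-- Descending factorial `x (x-1) ⋯ (x-n+1)` in `ℝ≥0∞`. -/
def descFactE (x : ℝ≥0∞) (n : ℕ) : ℝ≥0∞ := ∏ i ∈ Finset.range n, (x - (i : ℝ≥0∞))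

/-- The family `𝓘_T`: half-open rectangles in `ℝ^k` with corner coordinates off `T`. -/
def IsRectAvoiding (k : ℕ) (T : Set ℝ) (A : Set (Fin k → ℝ)) : Prop :=
  ∃ a b : Fin k → ℝ, (∀ i, a i ∉ T) ∧ (∀ i, b i ∉ T) ∧
    A = {x | ∀ i, x i ∈ Set.Ioc (a i) (b i)}

open ProbabilityTheory Filter Topology in
lemma law_eq_of_mgf {Ω₁ Ω₂ : Type*} [MeasurableSpace Ω₁] [MeasurableSpace Ω₂]
    (P₁ : Measure Ω₁) (P₂ : Measure Ω₂)
    [IsProbabilityMeasure P₁] [IsProbabilityMeasure P₂]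
    (Y₁ : Ω₁ → ℝ) (Y₂ : Ω₂ → ℝ) (h₁ : Measurable Y₁) (h₂ : Measurable Y₂)
    (p₁ : ∀ ω, 0 ≤ Y₁ ω) (p₂ : ∀ ω, 0 ≤ Y₂ ω) (δ : ℝ) (hδ : 0 < δ)
    (i₁ : Integrable (fun ω => Real.exp (δ * Y₁ ω)) P₁)
    (i₂ : Integrable (fun ω => Real.exp (δ * Y₂ ω)) P₂)
    (heq : ∀ s, 0 < s → s < δ → mgf Y₁ P₁ s = mgf Y₂ P₂ s) :
    P₁.map Y₁ = P₂.map Y₂ := by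
  have sub : ∀ {Ω : Type _} [MeasurableSpace Ω] (P : Measure Ω) [IsProbabilityMeasure P]
      (Y : Ω → ℝ), Measurable Y → (∀ ω, 0 ≤ Y ω) → Integrable (fun ω => Real.exp (δ * Y ω)) P →
      Set.Iio δ ⊆ interior (integrableExpSet Y P) := by
    intro Ω _ P _ Y hY pY iY
    refine interior_maximal ?_ isOpen_Iio
    intro s hs
    refine iY.mono' (by fun_prop) (ae_of_all _ fun ω => ?_)
    rw [Real.norm_eq_abs, Real.abs_exp]
    exact Real.exp_le_exp.2 (mul_le_mul_of_nonneg_right (le_of_lt hs) (pY ω))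
  have s₁ := sub P₁ Y₁ h₁ p₁ i₁
  have s₂ : Set.Iio δ ⊆ interior (integrableExpSet Y₂ P₂) := by
    refine interior_maximal ?_ isOpen_Iio
    intro s hs
    refine i₂.mono' (by fun_prop) (ae_of_all _ fun ω => ?_)
    rw [Real.norm_eq_abs, Real.abs_exp]
    exact Real.exp_le_exp.2 (mul_le_mul_of_nonneg_right (le_of_lt hs) (p₂ ω))
  have hX : AnalyticOnNhd ℂ (complexMGF Y₁ P₁) {z | z.re ∈ Set.Iio δ} :=
    analyticOnNhd_complexMGF.mono fun z hz => s₁ hz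
  have hY : AnalyticOnNhd ℂ (complexMGF Y₂ P₂) {z | z.re ∈ Set.Iio δ} :=
    analyticOnNhd_complexMGF.mono fun z hz => s₂ hz
  have key : Set.EqOn (complexMGF Y₁ P₁) (complexMGF Y₂ P₂) {z | z.re ∈ Set.Iio δ} := by
    refine AnalyticOnNhd.eqOn_of_preconnected_of_frequently_eq hX hY
      ((convex_Iio δ).linear_preimage Complex.reLm).isPreconnected
      (z₀ := ((δ / 2 : ℝ) : ℂ)) (by simp [hδ]) ?_
    have h_real : ∃ᶠ (x : ℝ) in 𝓝[≠] (δ / 2), complexMGF Y₁ P₁ x = complexMGF Y₂ P₂ x := by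
      refine Eventually.frequently ?_
      refine eventually_nhdsWithin_of_eventually_nhds ?_
      filter_upwards [Ioo_mem_nhds (half_pos hδ) (half_lt_self hδ)] with x hx
      rw [complexMGF_ofReal, complexMGF_ofReal, heq x hx.1 hx.2]
    rw [frequently_iff_seq_forall] at h_real ⊢
    obtain ⟨xs, hx_tendsto, hx_eq⟩ := h_real
    refine ⟨fun n ↦ xs n, ?_, fun n ↦ ?_⟩
    · rw [tendsto_nhdsWithin_iff] at hx_tendsto ⊢
      constructor
      · exact (Complex.continuous_ofReal.tendsto _).comp hx_tendsto.1
      · refine hx_tendsto.2.mono fun n hn => ?_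
        simp only [Set.mem_compl_iff, Set.mem_singleton_iff] at hn ⊢
        exact fun h => hn (Complex.ofReal_injective h)
    · exact hx_eq n
  have := Measure.isProbabilityMeasure_map (μ := P₁) h₁.aemeasurable
  have := Measure.isProbabilityMeasure_map (μ := P₂) h₂.aemeasurable
  refine Measure.ext_of_charFun ?_
  funext t
  rw [← complexMGF_mul_I h₁.aemeasurable, ← complexMGF_mul_I h₂.aemeasurable]
  exact key (by simp [hδ])

lemma prime_log_inj {ι : Type*} [Fintype ι] : ∃ t : ι → ℝ, (∀ j, 0 < t j) ∧
    Function.Injective (fun n : ι → ℕ => ∑ j, t j * (n j : ℝ)) := by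
  classical
  let e := Fintype.equivFin ι
  let p : ι → ℕ := fun j => Nat.nth Nat.Prime (e j)
  have hp : ∀ j, (p j).Prime := fun j => Nat.prime_nth_prime _
  have hinj : Function.Injective p := by
    intro a b hab
    have := (Nat.nth_injective Nat.infinite_setOfPred_prime) hab
    exact e.injective (Fin.ext this)
  refine ⟨fun j => Real.log (p j), fun j => Real.log_pos (by exact_mod_cast (hp j).one_lt), ?_⟩
  intro n n' h
  have hl : ∀ n : ι → ℕ, ∑ j, Real.log (p j) * (n j : ℝ) = Real.log ((∏ j, p j ^ n j : ℕ) : ℝ) := by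
    intro n
    push_cast
    rw [Real.log_prod]
    · simp [mul_comm]
    · intro j _
      exact pow_ne_zero _ (by exact_mod_cast (hp j).ne_zero)
  simp only [hl] at h
  have hpos : ∀ n : ι → ℕ, 0 < ∏ j, p j ^ n j := fun n =>
    Finset.prod_pos fun j _ => pow_pos (hp j).pos _
  have h2 : ∏ j, p j ^ n j = ∏ j, p j ^ n' j := by
    have := Real.log_injOn_pos (Set.mem_Ioi.2 (by exact_mod_cast hpos n))
      (Set.mem_Ioi.2 (by exact_mod_cast hpos n')) h
    exact_mod_cast this
  have hf : ∀ (n : ι → ℕ) i, (∏ j, p j ^ n j).factorization (p i) = n i := by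
    intro n i
    rw [Nat.factorization_prod (fun j _ => pow_ne_zero _ (hp j).ne_zero)]
    rw [Finsupp.finsetSum_apply, Finset.sum_eq_single i]
    · simp [(hp i).factorization_self]
    · intro j _ hj
      rw [Nat.factorization_pow, (hp j).factorization]
      simp [hinj.ne hj]
    · simp
  funext i
  rw [← hf n i, ← hf n' i, h2]

lemma gen_fun (z : ℝ≥0∞) (N : ℕ) :
    (1 + z) ^ N = ∑' r : ℕ, z ^ r / (r.factorial : ℝ≥0∞) * (N.descFactorial r : ℝ≥0∞) := by
  rw [tsum_eq_sum (s := Finset.range (N + 1)), add_comm, add_pow]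
  · refine Finset.sum_congr rfl fun r _ => ?_
    rw [Nat.descFactorial_eq_factorial_mul_choose, one_pow, mul_one, div_eq_mul_inv, mul_assoc]
    push_cast
    rw [← mul_assoc (_⁻¹), ENNReal.inv_mul_cancel, one_mul]
    · exact_mod_cast r.factorial_ne_zero
    · exact ENNReal.natCast_ne_top _
  · intro r hr
    rw [Nat.descFactorial_of_lt (by simpa using hr)]
    simp

lemma gen_eq {ι Ω₁ Ω₂ : Type*} [Fintype ι] [DecidableEq ι]
    [MeasurableSpace Ω₁] [MeasurableSpace Ω₂]
    (P₁ : Measure Ω₁) (P₂ : Measure Ω₂)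
    (N₁ : Ω₁ → ι → ℕ) (N₂ : Ω₂ → ι → ℕ) (h₁ : Measurable N₁) (h₂ : Measurable N₂)
    (hmom : ∀ n : ι → ℕ, ∫⁻ ω, ∏ j, ((N₁ ω j).descFactorial (n j) : ℝ≥0∞) ∂P₁ =
      ∫⁻ ω, ∏ j, ((N₂ ω j).descFactorial (n j) : ℝ≥0∞) ∂P₂) (z : ι → ℝ≥0∞) :
    ∫⁻ ω, ∏ j, (1 + z j) ^ (N₁ ω j) ∂P₁ = ∫⁻ ω, ∏ j, (1 + z j) ^ (N₂ ω j) ∂P₂ := by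
  let w : Finset ι → (ι → ℕ) → (ι → ℕ) → ℝ≥0∞ := fun J n N =>
    ∏ j, if j ∈ J then (1 + z j) ^ (N j) else ((N j).descFactorial (n j) : ℝ≥0∞)
  have step : ∀ (J : Finset ι) (i : ι), i ∉ J → ∀ n N, w (insert i J) n N =
      ∑' r : ℕ, z i ^ r / (r.factorial : ℝ≥0∞) * w J (Function.update n i r) N := by
    intro J i hi n N
    simp only [w]
    rw [← Finset.mul_prod_erase _ _ (Finset.mem_univ i)]
    rw [if_pos (Finset.mem_insert_self _ _), gen_fun, ← ENNReal.tsum_mul_right]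
    congr 1; funext r
    rw [← Finset.mul_prod_erase _ _ (Finset.mem_univ i), if_neg hi, Function.update_self, mul_assoc]
    congr 2
    refine Finset.prod_congr rfl fun j hj => ?_
    have hji := Finset.ne_of_mem_erase hj
    simp [hji, Function.update_of_ne]
  have hw : ∀ J n, Measurable (w J n) := fun J n => measurable_of_countable _
  have main : ∀ (J : Finset ι) n, ∫⁻ ω, w J n (N₁ ω) ∂P₁ = ∫⁻ ω, w J n (N₂ ω) ∂P₂ := by
    intro J
    induction J using Finset.induction_on with
    | empty => intro n; simpa [w] using hmom n
    | insert i J hi ih =>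
      intro n
      simp only [step J i hi]
      have m₁ : ∀ n, Measurable fun ω => w J n (N₁ ω) := fun n => (hw J n).comp h₁
      have m₂ : ∀ n, Measurable fun ω => w J n (N₂ ω) := fun n => (hw J n).comp h₂
      rw [lintegral_tsum (fun r => ((m₁ _).const_mul _).aemeasurable),
        lintegral_tsum (fun r => ((m₂ _).const_mul _).aemeasurable)]
      congr 1; funext r
      rw [lintegral_const_mul _ (m₁ _), lintegral_const_mul _ (m₂ _), ih]
  simpa [w] using main Finset.univ 0

open ProbabilityTheory Filter Topology in
lemma vec_law {ι Ω₁ Ω₂ : Type*} [Fintype ι]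
    [MeasurableSpace Ω₁] [MeasurableSpace Ω₂]
    (P₁ : Measure Ω₁) (P₂ : Measure Ω₂)
    [IsProbabilityMeasure P₁] [IsProbabilityMeasure P₂]
    (N₁ : Ω₁ → ι → ℕ) (N₂ : Ω₂ → ι → ℕ) (h₁ : Measurable N₁) (h₂ : Measurable N₂)
    (hmom : ∀ n : ι → ℕ, ∫⁻ ω, ∏ j, ((N₁ ω j).descFactorial (n j) : ℝ≥0∞) ∂P₁ =
      ∫⁻ ω, ∏ j, ((N₂ ω j).descFactorial (n j) : ℝ≥0∞) ∂P₂)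
    (hfin : ∀ j, ∃ ε : ℝ, 0 < ε ∧ (∑' n : ℕ, ENNReal.ofReal (ε ^ (n + 1) / ((n + 1).factorial : ℝ)) *
        ∫⁻ ω, ((N₁ ω j).descFactorial (n + 1) : ℝ≥0∞) ∂P₁) ≠ ⊤) :
    P₁.map N₁ = P₂.map N₂ := by
  classical
  obtain ⟨t, ht, hinj⟩ := prime_log_inj (ι := ι)
  choose ε hε hsum using hfin
  have meas : ∀ (f : (ι → ℕ) → ℝ≥0∞), Measurable f := fun f => measurable_of_countable _
  -- exponential moments
  have hexp : ∀ j, ∫⁻ ω, (1 + ENNReal.ofReal (ε j)) ^ (N₁ ω j) ∂P₁ ≠ ⊤ := by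
    intro j
    simp only [gen_fun]
    have mj : ∀ r, Measurable fun ω => ((N₁ ω j).descFactorial r : ℝ≥0∞) := fun r =>
      (meas fun n => ((n j).descFactorial r : ℝ≥0∞)).comp h₁
    rw [lintegral_tsum (fun r => ((mj r).const_mul _).aemeasurable)]
    rw [tsum_eq_zero_add' ENNReal.summable]
    refine ENNReal.add_ne_top.2 ⟨by simp, ?_⟩
    convert hsum j using 3 with r
    rw [lintegral_const_mul _ (mj (r + 1))]
    congr 1
    rw [ENNReal.ofReal_div_of_pos (by positivity), ENNReal.ofReal_pow (hε j).le,
      ENNReal.ofReal_natCast]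
  set Y : (ι → ℕ) → ℝ := fun n => ∑ j, t j * (n j : ℝ) with hY
  have Ypos : ∀ n, 0 ≤ Y n := fun n => Finset.sum_nonneg fun j _ =>
    mul_nonneg (ht j).le (Nat.cast_nonneg _)
  have hYE : ∀ s : ℝ, 0 ≤ s → ∀ n, ENNReal.ofReal (Real.exp (s * Y n)) =
      ∏ j, (1 + ENNReal.ofReal (Real.exp (s * t j) - 1)) ^ (n j) := by
    intro s hs n
    rw [hY, Finset.mul_sum, Real.exp_sum, ENNReal.ofReal_prod_of_nonneg (fun _ _ => (Real.exp_pos _).le)]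
    refine Finset.prod_congr rfl fun j _ => ?_
    have h1 : 1 ≤ Real.exp (s * t j) := Real.one_le_exp (mul_nonneg hs (ht j).le)
    rw [← ENNReal.ofReal_one, ← ENNReal.ofReal_add zero_le_one (by linarith), ← ENNReal.ofReal_pow (by linarith)]
    congr 1
    rw [add_sub_cancel, ← Real.exp_nat_mul]
    congr 1; ring
  have hEeq : ∀ s : ℝ, 0 ≤ s → ∫⁻ ω, ENNReal.ofReal (Real.exp (s * Y (N₁ ω))) ∂P₁ =
      ∫⁻ ω, ENNReal.ofReal (Real.exp (s * Y (N₂ ω))) ∂P₂ := by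
    intro s hs
    simp only [hYE s hs]
    exact gen_eq P₁ P₂ N₁ N₂ h₁ h₂ hmom _
  -- choice of δ
  obtain ⟨δ, hδ, hδε⟩ : ∃ δ : ℝ, 0 < δ ∧ ∀ j, Real.exp (δ * (Fintype.card ι * t j)) ≤ 1 + ε j := by
    have : ∀ᶠ δ in 𝓝[>] (0 : ℝ), ∀ j, Real.exp (δ * (Fintype.card ι * t j)) ≤ 1 + ε j := by
      refine eventually_nhdsWithin_of_eventually_nhds (eventually_all.2 fun j => ?_)
      have hc : Continuous fun δ : ℝ => Real.exp (δ * (Fintype.card ι * t j)) := by fun_prop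
      have := hc.tendsto 0
      have h0 : Real.exp (0 * (Fintype.card ι * t j)) < 1 + ε j := by simp [hε j]
      exact (this.eventually_lt_const h0).mono fun _ h => le_of_lt h
    obtain ⟨δ, h1, h2⟩ := (this.and self_mem_nhdsWithin).exists
    exact ⟨δ, h2, h1⟩
  have hbound : ∀ n : ι → ℕ, ENNReal.ofReal (Real.exp (δ * Y n)) ≤
      1 + ∑ j, (1 + ENNReal.ofReal (ε j)) ^ (n j) := by
    intro n
    rcases isEmpty_or_nonempty ι with hι | hι
    · simp [hY]
    obtain ⟨i, -, hi⟩ := Finset.exists_max_image Finset.univ (fun j => t j * (n j : ℝ))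
      Finset.univ_nonempty
    have hle : Y n ≤ Fintype.card ι * (t i * n i) := by
      have := Finset.sum_le_card_nsmul Finset.univ (fun j => t j * (n j : ℝ)) _ hi
      simpa [hY] using this
    calc ENNReal.ofReal (Real.exp (δ * Y n))
        ≤ ENNReal.ofReal ((1 + ε i) ^ (n i)) := by
          refine ENNReal.ofReal_le_ofReal ?_
          calc Real.exp (δ * Y n) ≤ Real.exp (n i * (δ * (Fintype.card ι * t i))) := by
                refine Real.exp_le_exp.2 ?_
                have := mul_le_mul_of_nonneg_left hle hδ.le
                linarith
            _ = Real.exp (δ * (Fintype.card ι * t i)) ^ (n i) := Real.exp_nat_mul _ _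
            _ ≤ _ := pow_le_pow_left₀ (Real.exp_pos _).le (hδε i) _
      _ = (1 + ENNReal.ofReal (ε i)) ^ (n i) := by
          rw [ENNReal.ofReal_pow (by linarith [hε i]), ENNReal.ofReal_add zero_le_one (hε i).le,
            ENNReal.ofReal_one]
      _ ≤ ∑ j, (1 + ENNReal.ofReal (ε j)) ^ (n j) :=
          Finset.single_le_sum (f := fun j => (1 + ENNReal.ofReal (ε j)) ^ (n j))
            (fun _ _ => zero_le) (Finset.mem_univ i)
      _ ≤ _ := le_add_self
  have hfin₁ : ∫⁻ ω, ENNReal.ofReal (Real.exp (δ * Y (N₁ ω))) ∂P₁ ≠ ⊤ := by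
    refine ne_top_of_le_ne_top ?_ (lintegral_mono fun ω => hbound (N₁ ω))
    rw [lintegral_add_left measurable_const, lintegral_finsetSum]
    · refine ENNReal.add_ne_top.2 ⟨by simp, ?_⟩
      exact ENNReal.sum_ne_top.2 fun j _ => hexp j
    · intro j _
      exact (meas fun n => (1 + ENNReal.ofReal (ε j)) ^ (n j)).comp h₁
  have hYm : Measurable Y := measurable_of_countable _
  have m₁ : Measurable (fun ω => Y (N₁ ω)) := hYm.comp h₁
  have m₂ : Measurable (fun ω => Y (N₂ ω)) := hYm.comp h₂
  have hlaw : P₁.map (fun ω => Y (N₁ ω)) = P₂.map (fun ω => Y (N₂ ω)) := by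
    refine law_eq_of_mgf P₁ P₂ _ _ m₁ m₂ (fun _ => Ypos _) (fun _ => Ypos _) δ hδ ?_ ?_ ?_
    · rw [← lintegral_ofReal_ne_top_iff_integrable (by fun_prop) (ae_of_all _ fun _ => (Real.exp_pos _).le)]
      exact hfin₁
    · rw [← lintegral_ofReal_ne_top_iff_integrable (by fun_prop) (ae_of_all _ fun _ => (Real.exp_pos _).le)]
      rw [← hEeq δ hδ.le]
      exact hfin₁
    · intro s hs _
      unfold mgf
      rw [integral_eq_lintegral_of_nonneg_ae (ae_of_all _ fun _ => (Real.exp_pos _).le) (by fun_prop),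
        integral_eq_lintegral_of_nonneg_ae (ae_of_all _ fun _ => (Real.exp_pos _).le) (by fun_prop),
        hEeq s hs.le]
  refine Measure.ext_of_singleton fun n => ?_
  have e₁ : N₁ ⁻¹' {n} = (fun ω => Y (N₁ ω)) ⁻¹' {Y n} := by
    ext ω; simp only [Set.mem_preimage, Set.mem_singleton_iff]; exact hinj.eq_iff.symm
  have e₂ : N₂ ⁻¹' {n} = (fun ω => Y (N₂ ω)) ⁻¹' {Y n} := by
    ext ω; simp only [Set.mem_preimage, Set.mem_singleton_iff]; exact hinj.eq_iff.symm
  rw [Measure.map_apply h₁ (measurableSet_singleton n), Measure.map_apply h₂ (measurableSet_singleton n), e₁, e₂,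
    ← Measure.map_apply m₁ (measurableSet_singleton _),
    ← Measure.map_apply m₂ (measurableSet_singleton _), hlaw]


lemma descFactE_natCast (N n : ℕ) : descFactE (N : ℝ≥0∞) n = (N.descFactorial n : ℝ≥0∞) := by
  unfold descFactE
  induction n with
  | zero => simp
  | succ n ih =>
    rw [Finset.prod_range_succ, ih, Nat.descFactorial_succ, mul_comm]
    push_cast
    rfl

lemma rect_meas {k : ℕ} {T : Set ℝ} {A : Set (Fin k → ℝ)} (h : IsRectAvoiding k T A) :
    MeasurableSet A := by
  obtain ⟨a, b, -, -, rfl⟩ := h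
  have : {x : Fin k → ℝ | ∀ i, x i ∈ Set.Ioc (a i) (b i)} =
      Set.univ.pi fun i => Set.Ioc (a i) (b i) := by
    ext x; simp
  rw [this]
  exact MeasurableSet.univ_pi fun i => measurableSet_Ioc

lemma rect_bdd {k : ℕ} {T : Set ℝ} {A : Set (Fin k → ℝ)} (h : IsRectAvoiding k T A) :
    Bornology.IsBounded A := by
  obtain ⟨a, b, -, -, rfl⟩ := h
  refine (Metric.isBounded_Icc a b).subset fun x hx => ?_
  exact ⟨fun i => (hx i).1.le, fun i => (hx i).2⟩

def cnt {k : ℕ} {Ω ι : Type*} [MeasurableSpace Ω]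
    (M : Ω → Measure (Fin k → ℝ)) (A : ι → Set (Fin k → ℝ)) : Ω → ι → ℕ :=
  fun ω j => ⌊(M ω (A j)).toReal⌋₊

lemma cnt_eq {k : ℕ} {T : Set ℝ} {Ω ι : Type*} [MeasurableSpace Ω]
    {M : Ω → Measure (Fin k → ℝ)} (hM : IsPointProcess k M) {A : ι → Set (Fin k → ℝ)}
    (hA : ∀ j, IsRectAvoiding k T (A j)) (ω : Ω) (j : ι) :
    M ω (A j) = (cnt M A ω j : ℝ≥0∞) := by
  obtain ⟨n, hn⟩ := hM.2 ω (A j) (rect_meas (hA j)) (rect_bdd (hA j))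
  simp [cnt, hn]

lemma cnt_meas {k : ℕ} {T : Set ℝ} {Ω ι : Type*} [MeasurableSpace Ω]
    {M : Ω → Measure (Fin k → ℝ)} (hM : IsPointProcess k M) {A : ι → Set (Fin k → ℝ)}
    (hA : ∀ j, IsRectAvoiding k T (A j)) : Measurable (cnt M A) :=
  measurable_pi_lambda _ fun j => ((hM.1 (A j) (rect_meas (hA j))).ennreal_toReal).nat_floor

section main

variable {k : ℕ} {T : Set ℝ}
    {Ω₁ Ω₂ : Type*} [MeasurableSpace Ω₁] [MeasurableSpace Ω₂]
    {P₁ : Measure Ω₁} {P₂ : Measure Ω₂}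
    [IsProbabilityMeasure P₁] [IsProbabilityMeasure P₂]
    {M₁ : Ω₁ → Measure (Fin k → ℝ)} {M₂ : Ω₂ → Measure (Fin k → ℝ)}

lemma rect_law
    (hM₁ : IsPointProcess k M₁) (hM₂ : IsPointProcess k M₂)
    (heq : ∀ (m : ℕ) (n : Fin m → ℕ) (A : Fin m → Set (Fin k → ℝ)),
      0 < m → (∀ j, 0 < n j) → (∀ j, IsRectAvoiding k T (A j)) →
      (∀ i j, i ≠ j → Disjoint (A i) (A j)) →
      (∫⁻ ω, ∏ j, descFactE (M₁ ω (A j)) (n j) ∂P₁) =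
        ∫⁻ ω, ∏ j, descFactE (M₂ ω (A j)) (n j) ∂P₂)
    (hsum : ∀ B : Set (Fin k → ℝ), IsRectAvoiding k T B → ∃ ε : ℝ, 0 < ε ∧
      (∑' n : ℕ, ENNReal.ofReal (ε ^ (n + 1) / ((n + 1).factorial : ℝ)) *
        ∫⁻ ω, descFactE (M₁ ω B) (n + 1) ∂P₁) ≠ ⊤)
    {ι : Type*} [Fintype ι] (A : ι → Set (Fin k → ℝ)) (hA : ∀ j, IsRectAvoiding k T (A j))
    (hd : ∀ i j, i ≠ j → Disjoint (A i) (A j)) :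
    P₁.map (fun ω j => M₁ ω (A j)) = P₂.map (fun ω j => M₂ ω (A j)) := by
  classical
  have key : P₁.map (cnt M₁ A) = P₂.map (cnt M₂ A) := by
    refine vec_law P₁ P₂ _ _ (cnt_meas hM₁ hA) (cnt_meas hM₂ hA) ?_ ?_
    · intro n
      simp only [← descFactE_natCast, ← cnt_eq hM₁ hA, ← cnt_eq hM₂ hA]
      have red : ∀ (x : ι → ℝ≥0∞), ∏ j, descFactE (x j) (n j) =
          ∏ j : {j // n j ≠ 0}, descFactE (x j) (n j) := by
        intro x
        rw [← Fintype.prod_subtype_mul_prod_subtype (fun j => n j ≠ 0)]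
        have : ∏ i : {j // ¬ (n j ≠ 0)}, descFactE (x i) (n i) = 1 := by
          refine Finset.prod_eq_one fun i _ => ?_
          rw [not_not.1 i.2]; simp [descFactE]
        rw [this, mul_one]
      let e := Fintype.equivFin {j // n j ≠ 0}
      have red2 : ∀ (x : ι → ℝ≥0∞), ∏ j, descFactE (x j) (n j) =
          ∏ j, descFactE (x (e.symm j)) (n (e.symm j)) := by
        intro x
        rw [red x, ← Equiv.prod_comp e.symm]
      have r₁ := fun ω => red2 fun j => M₁ ω (A j)
      have r₂ := fun ω => red2 fun j => M₂ ω (A j)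
      simp only [r₁, r₂]
      rcases Nat.eq_zero_or_pos (Fintype.card {j // n j ≠ 0}) with h0 | h0
      · have : IsEmpty (Fin (Fintype.card {j // n j ≠ 0})) := by rw [h0]; infer_instance
        simp
      · refine heq _ _ (fun j => A (e.symm j)) h0 (fun j => Nat.pos_of_ne_zero (e.symm j).2)
          (fun j => hA _) fun i j hij => hd _ _ fun h => hij ?_
        exact e.symm.injective (Subtype.ext h)
    · intro j
      simp only [← descFactE_natCast, ← cnt_eq hM₁ hA]
      exact hsum _ (hA j)
  have c₁ : (fun ω j => M₁ ω (A j)) = (fun n : ι → ℕ => fun j => (n j : ℝ≥0∞)) ∘ cnt M₁ A := by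
    funext ω j; exact cnt_eq hM₁ hA ω j
  have c₂ : (fun ω j => M₂ ω (A j)) = (fun n : ι → ℕ => fun j => (n j : ℝ≥0∞)) ∘ cnt M₂ A := by
    funext ω j; exact cnt_eq hM₂ hA ω j
  have hm : Measurable (fun n : ι → ℕ => fun j => (n j : ℝ≥0∞)) := measurable_of_countable _
  rw [c₁, c₂, ← Measure.map_map hm (cnt_meas hM₁ hA), ← Measure.map_map hm (cnt_meas hM₂ hA), key]

/-- Index of the level-`n` dyadic cell (shifted by `s`). -/
def idx (k : ℕ) (s : ℝ) (n : ℕ) (x : Fin k → ℝ) : Fin k → ℤ := fun i => ⌈(x i - s) * 2 ^ n⌉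

def cell (k : ℕ) (s : ℝ) (n : ℕ) (j : Fin k → ℤ) : Set (Fin k → ℝ) := idx k s n ⁻¹' {j}

lemma idx_meas (s : ℝ) (n : ℕ) : Measurable (idx k s n) :=
  measurable_pi_lambda _ fun i => Int.measurable_ceil.comp (by fun_prop)

lemma cell_meas (s : ℝ) (n : ℕ) (j : Fin k → ℤ) : MeasurableSet (cell k s n j) :=
  idx_meas s n (measurableSet_singleton j)

lemma cell_disj (s : ℝ) (n : ℕ) (i j : Fin k → ℤ) (h : i ≠ j) :
    Disjoint (cell k s n i) (cell k s n j) :=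
  Disjoint.preimage _ (by simpa using h)

lemma exists_shift (hT : T.Countable) : ∃ s : ℝ, ∀ (n : ℕ) (j : ℤ), s + j / 2 ^ n ∉ T := by
  have hc : (⋃ n : ℕ, ⋃ j : ℤ, (fun t : ℝ => t - j / 2 ^ n) '' T).Countable :=
    Set.countable_iUnion fun n => Set.countable_iUnion fun j => hT.image _
  obtain ⟨s, hs⟩ := (hc.dense_compl ℝ).nonempty
  refine ⟨s, fun n j h => hs ?_⟩
  simp only [Set.mem_iUnion]
  exact ⟨n, j, _, h, by simp⟩

lemma cell_rect {s : ℝ} (hs : ∀ (n : ℕ) (j : ℤ), s + j / 2 ^ n ∉ T) (n : ℕ) (j : Fin k → ℤ) :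
    IsRectAvoiding k T (cell k s n j) := by
  refine ⟨fun i => s + ((j i - 1 : ℤ) : ℝ) / 2 ^ n, fun i => s + (j i : ℝ) / 2 ^ n,
    fun i => hs _ _, fun i => hs _ _, ?_⟩
  ext x
  simp only [cell, idx, Set.mem_preimage, Set.mem_singleton_iff, funext_iff, Int.ceil_eq_iff,
    Set.mem_ofPred_eq, Set.mem_Ioc]
  refine forall_congr' fun i => ?_
  have h2 : (0 : ℝ) < 2 ^ n := by positivity
  rw [← sub_le_iff_le_add', ← lt_sub_iff_add_lt', div_lt_iff₀ h2, le_div_iff₀ h2]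
  push_cast
  rfl

/-- Parent map. -/
def par (k : ℕ) (j : Fin k → ℤ) : Fin k → ℤ := fun i => ⌈(j i : ℝ) / 2⌉

lemma idx_succ (s : ℝ) (n : ℕ) (x : Fin k → ℝ) : idx k s n x = par k (idx k s (n + 1) x) := by
  funext i
  simp only [idx, par]
  have : (x i - s) * 2 ^ n = ((x i - s) * 2 ^ (n + 1)) / 2 := by rw [pow_succ]; ring
  rw [this]
  generalize (x i - s) * 2 ^ (n + 1) = y
  refine le_antisymm (Int.ceil_le_ceil (by linarith [Int.le_ceil y])) ?_
  rw [Int.ceil_le]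
  have h := Int.le_ceil (y / 2)
  have : ⌈y⌉ ≤ 2 * ⌈y / 2⌉ := by
    rw [Int.ceil_le]; push_cast; linarith
  have h' : (⌈y⌉ : ℝ) ≤ 2 * ⌈y / 2⌉ := by exact_mod_cast this
  linarith

lemma cell_par (s : ℝ) (n : ℕ) (j : Fin k → ℤ) (μ : Measure (Fin k → ℝ)) :
    μ (cell k s n j) = ∑' i : {i // par k i = j}, μ (cell k s (n + 1) i) := by
  rw [← measure_iUnion (fun a b hab => cell_disj s (n + 1) _ _ (fun h => hab (Subtype.ext h)))
    fun i => cell_meas s (n + 1) _]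
  congr 1
  ext x
  simp only [cell, Set.mem_preimage, Set.mem_singleton_iff, Set.mem_iUnion, Subtype.exists,
    idx_succ s n x]
  constructor
  · intro h; exact ⟨_, h, rfl⟩
  · rintro ⟨i, hi, hx⟩; rw [hx, hi]

/-- Measures finite on unit cells. -/
def LF (k : ℕ) (s : ℝ) : Type := {μ : Measure (Fin k → ℝ) // ∀ c, μ (cell k s 0 c) ≠ ⊤}

def ev (k : ℕ) (s : ℝ) (n : ℕ) (μ : LF k s) : (Fin k → ℤ) → ℝ≥0∞ := fun j => μ.1 (cell k s n j)

@[reducible]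
def lvl (k : ℕ) (s : ℝ) (n : ℕ) : MeasurableSpace (LF k s) :=
  MeasurableSpace.comap (ev k s n) inferInstance

lemma lvl_mono (s : ℝ) : Monotone (lvl k s) := by
  refine monotone_nat_of_le_succ fun n => ?_
  rw [lvl, ← measurable_iff_comap_le]
  refine @measurable_pi_lambda _ _ _ (lvl k s (n + 1)) _ _ fun j => ?_
  simp only [ev, cell_par s n j]
  refine @Measurable.ennreal_tsum _ (lvl k s (n + 1)) _ _ _ fun i => ?_
  exact (measurable_pi_apply i.1).comp (comap_measurable (ev k s (n + 1)))

instance LFms (k : ℕ) (s : ℝ) : MeasurableSpace (LF k s) := ⨆ n, lvl k s n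

lemma ev_meas (s : ℝ) (n : ℕ) : Measurable (ev k s n) :=
  (comap_measurable (ev k s n)).mono (le_iSup (lvl k s) n) le_rfl

@[reducible]
def ims (k : ℕ) (s : ℝ) (n : ℕ) : MeasurableSpace (Fin k → ℝ) :=
  MeasurableSpace.comap (idx k s n) ⊤

lemma borel_gen (s : ℝ) : (inferInstance : MeasurableSpace (Fin k → ℝ)) =
    MeasurableSpace.generateFrom (⋃ n, {A | MeasurableSet[ims k s n] A}) := by
  rw [MeasurableSpace.generateFrom_iUnion_measurableSet (ims k s)]
  refine le_antisymm ?_ (iSup_le fun n => ?_)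
  · have : @Measurable _ _ (⨆ n, ims k s n) inferInstance
        (id : (Fin k → ℝ) → (Fin k → ℝ)) := by
      refine @measurable_pi_lambda _ _ _ (⨆ n, ims k s n) _ _ fun i => ?_
      refine @measurable_of_tendsto_metrizable _ _ (⨆ n, ims k s n) _ _ _ _
        (fun n x => (idx k s n x i : ℝ) / 2 ^ n + s) _ (fun n => ?_) ?_
      · have h1 : @Measurable _ _ (⨆ n, ims k s n) ⊤ (idx k s n) :=
          (comap_measurable (m := ⊤) (idx k s n)).mono
            (le_iSup (ims k s) n) le_rfl
        have h2 : @Measurable _ _ ⊤ _ (fun j : Fin k → ℤ => (j i : ℝ) / 2 ^ n + s) :=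
          measurable_from_top
        exact h2.comp h1
      · rw [tendsto_pi_nhds]
        intro x
        have hlim : Filter.Tendsto (fun n : ℕ => x i + ((1 : ℝ) / 2) ^ n) Filter.atTop
            (nhds (x i)) := by
          simpa using (tendsto_pow_atTop_nhds_zero_of_lt_one (r := (1 : ℝ) / 2) (by norm_num)
            (by norm_num)).const_add (x i)
        refine tendsto_of_tendsto_of_tendsto_of_le_of_le tendsto_const_nhds hlim ?_ ?_
        · intro n
          have h2 : (0 : ℝ) < 2 ^ n := by positivity
          have := Int.le_ceil ((x i - s) * 2 ^ n)
          have := (le_div_iff₀ h2).2 this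
          simp only [idx, id]
          linarith
        · intro n
          have h2 : (0 : ℝ) < 2 ^ n := by positivity
          have := (Int.ceil_lt_add_one ((x i - s) * 2 ^ n)).le
          have := (div_le_div_iff_of_pos_right h2).2 this
          rw [add_div, mul_div_cancel_right₀ _ h2.ne'] at this
          simp only [idx, one_div, inv_pow] at this ⊢
          linarith
    have := measurable_iff_comap_le.1 this
    rwa [MeasurableSpace.comap_id] at this
  · rw [← measurable_iff_comap_le]
    refine (idx_meas s n).mono le_rfl ?_
    intro A _
    exact A.to_countable.measurableSet

lemma idx_comap_mono (s : ℝ) : Monotone (ims k s) := by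
  refine monotone_nat_of_le_succ fun n => ?_
  rw [← measurable_iff_comap_le]
  have : idx k s n = par k ∘ idx k s (n + 1) := funext fun x => idx_succ s n x
  rw [this]
  exact (@measurable_from_top _ _ ⊤ (par k)).comp (comap_measurable (m := ⊤) (idx k s (n + 1)))

lemma eval_inter_meas (s : ℝ) (c : Fin k → ℤ) (B : Set (Fin k → ℝ)) (hB : MeasurableSet B) :
    Measurable fun μ : LF k s => μ.1 (B ∩ cell k s 0 c) := by
  have hcell : Measurable fun μ : LF k s => μ.1 (cell k s 0 c) :=
    (measurable_pi_apply c).comp (ev_meas s 0)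
  refine MeasurableSpace.induction_on_inter
    (C := fun B _ => Measurable fun μ : LF k s => μ.1 (B ∩ cell k s 0 c))
    (borel_gen (k := k) s) ?_ ?_ ?_ ?_ ?_ B hB
  · refine isPiSystem_iUnion_of_monotone _ (fun n => ?_) (fun a b hab => ?_)
    · exact @MeasurableSpace.isPiSystem_measurableSet _ (ims k s n)
    · exact fun A hA => idx_comap_mono s hab A hA
  · simp
  · intro A hA
    obtain ⟨n, hA⟩ := Set.mem_iUnion.1 hA
    have hc : MeasurableSet[ims k s n] (cell k s 0 c) :=
      idx_comap_mono s (Nat.zero_le n) _ ⟨{c}, trivial, rfl⟩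
    obtain ⟨D, -, hD⟩ := @MeasurableSet.inter _ (ims k s n) _ _ hA hc
    have : ∀ μ : LF k s, μ.1 (A ∩ cell k s 0 c) = ∑' d : D, μ.1 (cell k s n d) := by
      intro μ
      rw [← measure_iUnion (fun a b hab => cell_disj s n _ _ (fun h => hab (Subtype.ext h)))
        fun i => cell_meas s n _, ← hD]
      congr 1
      ext x
      simp [cell]
    simp only [this]
    exact Measurable.tsum fun d => (measurable_pi_apply d.1).comp (ev_meas s n)
  · intro A hA ih
    have : ∀ μ : LF k s, μ.1 (Aᶜ ∩ cell k s 0 c) = μ.1 (cell k s 0 c) - μ.1 (A ∩ cell k s 0 c) := by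
      intro μ
      rw [← measure_sdiff Set.inter_subset_right (hA.inter (cell_meas s 0 c)).nullMeasurableSet]
      · congr 1; ext x; simp; tauto
      · exact ne_top_of_le_ne_top (μ.2 c) (measure_mono Set.inter_subset_right)
    simp only [this]
    exact hcell.sub ih
  · intro f hf hfm ih
    have : ∀ μ : LF k s, μ.1 ((⋃ i, f i) ∩ cell k s 0 c) = ∑' i, μ.1 (f i ∩ cell k s 0 c) := by
      intro μ
      rw [Set.iUnion_inter, measure_iUnion (fun a b hab => (hf hab).mono Set.inter_subset_left
        Set.inter_subset_left) fun i => (hfm i).inter (cell_meas s 0 c)]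
    simp only [this]
    exact Measurable.tsum ih

lemma eval_meas (s : ℝ) (B : Set (Fin k → ℝ)) (hB : MeasurableSet B) :
    Measurable fun μ : LF k s => μ.1 B := by
  have : ∀ μ : LF k s, μ.1 B = ∑' c, μ.1 (B ∩ cell k s 0 c) := by
    intro μ
    rw [← measure_iUnion (fun a b hab => (cell_disj s 0 _ _ hab).mono Set.inter_subset_right
        Set.inter_subset_right) fun i => hB.inter (cell_meas s 0 i)]
    congr 1
    ext x; simp [cell]
  simp only [this]
  exact Measurable.tsum fun c => eval_inter_meas s c B hB

def toLF {k : ℕ} {T : Set ℝ} {Ω : Type*} [MeasurableSpace Ω] {M : Ω → Measure (Fin k → ℝ)}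
    (hM : IsPointProcess k M) {s : ℝ} (hs : ∀ (n : ℕ) (j : ℤ), s + j / 2 ^ n ∉ T)
    (ω : Ω) : LF k s :=
  ⟨M ω, fun c => by
    obtain ⟨n, hn⟩ := hM.2 ω _ (rect_meas (cell_rect hs 0 c)) (rect_bdd (cell_rect hs 0 c))
    rw [hn]
    exact ENNReal.natCast_ne_top n⟩

lemma toLF_meas {k : ℕ} {T : Set ℝ} {Ω : Type*} [MeasurableSpace Ω] {M : Ω → Measure (Fin k → ℝ)}
    (hM : IsPointProcess k M) {s : ℝ} (hs : ∀ (n : ℕ) (j : ℤ), s + j / 2 ^ n ∉ T) :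
    Measurable (toLF hM hs) := by
  rw [measurable_iff_comap_le, LFms, MeasurableSpace.comap_iSup]
  refine iSup_le fun n => ?_
  rw [lvl, MeasurableSpace.comap_comp, ← measurable_iff_comap_le]
  exact measurable_pi_lambda _ fun j => hM.1 _ (cell_meas s n j)

end main

/-- Corollary 2.5 (`CorUnique`): two point processes with equal joint factorial
moments on disjoint rectangles in `𝓘_T`, the moments not growing too fast, have
the same distribution. -/
theorem stmt5 (k : ℕ) (T : Set ℝ) (hT : T.Countable)
    {Ω₁ Ω₂ : Type*} [MeasurableSpace Ω₁] [MeasurableSpace Ω₂]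
    (P₁ : Measure Ω₁) (P₂ : Measure Ω₂)
    [IsProbabilityMeasure P₁] [IsProbabilityMeasure P₂]
    (M₁ : Ω₁ → Measure (Fin k → ℝ)) (M₂ : Ω₂ → Measure (Fin k → ℝ))
    (hM₁ : IsPointProcess k M₁) (hM₂ : IsPointProcess k M₂)
    (heq : ∀ (m : ℕ) (n : Fin m → ℕ) (A : Fin m → Set (Fin k → ℝ)),
      0 < m → (∀ j, 0 < n j) → (∀ j, IsRectAvoiding k T (A j)) →
      (∀ i j, i ≠ j → Disjoint (A i) (A j)) →
      (∫⁻ ω, ∏ j, descFactE (M₁ ω (A j)) (n j) ∂P₁) =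
        ∫⁻ ω, ∏ j, descFactE (M₂ ω (A j)) (n j) ∂P₂)
    (hsum : ∀ B : Set (Fin k → ℝ), IsRectAvoiding k T B → ∃ ε : ℝ, 0 < ε ∧
      (∑' n : ℕ, ENNReal.ofReal (ε ^ (n + 1) / ((n + 1).factorial : ℝ)) *
        ∫⁻ ω, descFactE (M₁ ω B) (n + 1) ∂P₁) ≠ ⊤) :
    ∀ (p : ℕ) (B : Fin p → Set (Fin k → ℝ)),
      (∀ i, MeasurableSet (B i)) → (∀ i, Bornology.IsBounded (B i)) →
      Measure.map (fun ω i => M₁ ω (B i)) P₁ =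
        Measure.map (fun ω i => M₂ ω (B i)) P₂ := by
  obtain ⟨s, hs⟩ := exists_shift hT
  have m₁ := toLF_meas hM₁ hs
  have m₂ := toLF_meas hM₂ hs
  have hfull : ∀ n : ℕ, P₁.map (fun ω j => M₁ ω (cell k s n j)) =
      P₂.map (fun ω j => M₂ ω (cell k s n j)) := by
    intro n
    have v₁ : Measurable (fun ω j => M₁ ω (cell k s n j)) :=
      measurable_pi_lambda _ fun j => hM₁.1 _ (cell_meas s n j)
    have v₂ : Measurable (fun ω j => M₂ ω (cell k s n j)) :=
      measurable_pi_lambda _ fun j => hM₂.1 _ (cell_meas s n j)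
    have := Measure.isProbabilityMeasure_map (μ := P₂) v₂.aemeasurable
    refine IsProjectiveLimit.unique
      (P := fun I => (P₂.map (fun ω j => M₂ ω (cell k s n j))).map I.restrict) ?_ (fun I => rfl)
    intro I
    beta_reduce
    rw [Measure.map_map (by fun_prop) v₁, Measure.map_map (by fun_prop) v₂]
    exact rect_law hM₁ hM₂ heq hsum (fun j : I => cell k s n j) (fun j => cell_rect hs n _)
      (fun i j hij => cell_disj s n _ _ fun h => hij (Subtype.ext h))
  have hQ : P₁.map (toLF hM₁ hs) = P₂.map (toLF hM₂ hs) := by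
    have := Measure.isProbabilityMeasure_map (μ := P₁) m₁.aemeasurable
    have := Measure.isProbabilityMeasure_map (μ := P₂) m₂.aemeasurable
    refine ext_of_generate_finite (⋃ n, {A | MeasurableSet[lvl k s n] A})
      (MeasurableSpace.generateFrom_iUnion_measurableSet (lvl k s)).symm ?_ ?_ (by simp)
    · refine isPiSystem_iUnion_of_monotone _ (fun n => ?_) (fun a b hab => ?_)
      · exact @MeasurableSpace.isPiSystem_measurableSet _ (lvl k s n)
      · exact fun A hA => lvl_mono s hab A hA
    · intro A hA
      obtain ⟨n, D, hD, rfl⟩ := Set.mem_iUnion.1 hA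
      rw [Measure.map_apply m₁ (ev_meas s n hD), Measure.map_apply m₂ (ev_meas s n hD)]
      have h := congrArg (fun μ => μ D) (hfull n)
      rwa [Measure.map_apply (measurable_pi_lambda _ fun j => hM₁.1 _ (cell_meas s n j)) hD,
        Measure.map_apply (measurable_pi_lambda _ fun j => hM₂.1 _ (cell_meas s n j)) hD] at h
  intro p B hB _
  have hev : Measurable fun (μ : LF k s) (i : Fin p) => μ.1 (B i) :=
    measurable_pi_lambda _ fun i => eval_meas s (B i) (hB i)
  have h := congrArg (fun Q => Q.map fun (μ : LF k s) (i : Fin p) => μ.1 (B i)) hQ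
  rwa [Measure.map_map hev m₁, Measure.map_map hev m₂] at h
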